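/- For all integers n ≥ 0, pod(3n+2) ≡ −pod(27n+17) (mod 3), i.e., 3 divides pod(3n+2) + pod(27n+17). -/

import Mathlib

/-!
Write `ψ(q) = ∑ q ^ (k(k+1)/2)`. The generating function of `pod` is
`∏ (1 + q ^ (2k-1)) / (1 - q ^ (2k))`, which equals `1 / ψ(-q)` by an identity of Gauss. This is
`podSeries_mul_psi`; it comes from the finite identity of Shanks, `shanks_identity`, which is proved by
telescoping and yields the identity of Gauss modulo `q ^ (2n+1)` for every `n`.

Everything else happens in `𝔽₃⟦q⟧`, where `g³ = g(q³)`. Let `Ψ = ψ(-q)`, `G = 1 / Ψ`, and let `U_r`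
extract the coefficients at exponents `3n + r`, so that `U_r (f g³) = U_r(f) g`. Triangular numbers
are `0` or `1` mod `3`, and those that are `1` mod `3` are the numbers `9 T + 1` with `T`
triangular; hence `Ψ = A³ - q Ψ⁹` for some `A`. This gives `U₁ Ψ = -Ψ³` and `U₂ (Ψ²) = Ψ⁶`.
Therefore

* `G Ψ³ = Ψ²` gives `U₂ G = Ψ⁶ / Ψ = Ψ⁵`;
* `U₂ (Ψ⁵) = U₂ (Ψ² Ψ³) = Ψ⁷ = Ψ (Ψ²)³`;
* `U₁ (Ψ (Ψ²)³) = -Ψ³ Ψ² = -Ψ⁵`.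

So `U₁ U₂ U₂ G = -U₂ G`, and the coefficient of `qⁿ` is the congruence, as
`27n + 17 = 3 (3 (3n + 1) + 2) + 2`.
-/

open PowerSeries

/-- `pod n` is the number of partitions of `n` in which the odd parts are distinct. -/
noncomputable def pod (n : ℕ) : ℕ :=
  Nat.card {p : n.Partition // ∀ k ∈ p.parts, Odd k → p.parts.count k ≤ 1}

open Finset

/-! ### A finite form of the identity of Gauss -/

/-- The product of `1 - x ^ (2k)` over `s < k ≤ n`. -/
def evenProd {R : Type*} [CommRing R] (x : R) (n s : ℕ) : R :=
  ∏ k ∈ Ico s n, (1 - x ^ (2 * (k + 1)))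

/-- The product of `1 - x ^ (2k-1)` over `1 ≤ k ≤ n`. -/
def oddProd {R : Type*} [CommRing R] (x : R) (n : ℕ) : R :=
  ∏ k ∈ range n, (1 - x ^ (2 * k + 1))

lemma oddProd_succ {R : Type*} [CommRing R] (x : R) (n : ℕ) :
    oddProd x (n + 1) = oddProd x n * (1 - x ^ (2 * n + 1)) := prod_range_succ _ _

lemma evenProd_succ_right {R : Type*} [CommRing R] (x : R) {n s : ℕ} (h : s ≤ n) :
    evenProd x (n + 1) s = evenProd x n s * (1 - x ^ (2 * (n + 1))) :=
  prod_Ico_succ_top h _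

lemma evenProd_eq_mul {R : Type*} [CommRing R] (x : R) {n s : ℕ} (h : s < n) :
    evenProd x n s = (1 - x ^ (2 * (s + 1))) * evenProd x n (s + 1) :=
  prod_eq_prod_Ico_succ_bot h _

/-- The induction step of `shanks_identity`: the `s`-th summand for `n + 1`, minus `1 - x ^ (2n+1)`
times the `s`-th summand for `n`, telescopes when summed over `s ≤ m`. -/
lemma shanks_telescope {R : Type*} [CommRing R] (x : R) (n m : ℕ) (h : m ≤ n) :
    ∑ s ∈ range (m + 1), (evenProd x (n + 1) s * oddProd x s * x ^ (s * (2 * n + 3))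
      - (1 - x ^ (2 * n + 1)) * (evenProd x n s * oddProd x s * x ^ (s * (2 * n + 1))))
    = evenProd x n m * oddProd x (m + 1) * x ^ ((m + 1) * (2 * n + 1)) := by
  induction m with
  | zero =>
    rw [sum_range_one, evenProd_succ_right x h, oddProd_succ]
    simp [oddProd]
    ring
  | succ m ih =>
    rw [sum_range_succ, ih (by omega), evenProd_succ_right x h, evenProd_eq_mul x (by omega : m < n),
      oddProd_succ x (m + 1)]
    ring

/-- Finite form, due to Shanks, of the identity of Gauss
`∑ x ^ (s(s+1)/2) = ∏ (1 - x ^ (2k)) / (1 - x ^ (2k-1))`,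
with denominators cleared. Modulo `x ^ (2n+1)` only the term `s = 0` on the left survives. -/
lemma shanks_identity {R : Type*} [CommRing R] (x : R) (n : ℕ) :
    ∑ s ∈ range (n + 1), evenProd x n s * oddProd x s * x ^ (s * (2 * n + 1))
    = oddProd x n * ∑ s ∈ range (2 * n + 1), x ^ (s * (s + 1) / 2) := by
  induction n with
  | zero => simp [evenProd, oddProd]
  | succ n ih =>
    have h := shanks_telescope x n n le_rfl
    rw [sum_sub_distrib, ← mul_sum, ih, sub_eq_iff_eq_add] at h
    have e : ∀ s, s * (2 * (n + 1) + 1) = s * (2 * n + 3) := fun s => by ring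
    simp only [e]
    rw [sum_range_succ, h, show 2 * (n + 1) + 1 = 2 * n + 1 + 1 + 1 by ring,
      sum_range_succ _ (2 * n + 1 + 1), sum_range_succ _ (2 * n + 1)]
    have e1 : (2 * n + 1) * (2 * n + 1 + 1) / 2 = (n + 1) * (2 * n + 1) :=
      Nat.div_eq_of_eq_mul_left two_pos (by ring)
    have e2 : (2 * n + 1 + 1) * (2 * n + 1 + 1 + 1) / 2 = (n + 1) * (2 * n + 3) :=
      Nat.div_eq_of_eq_mul_left two_pos (by ring)
    rw [e1, e2]
    have e3 : ∀ m, evenProd x m m = 1 := fun m => by simp [evenProd]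
    rw [e3, e3, oddProd_succ]
    ring

/-! ### Sections of power series mod 3 -/

/-- The Frobenius map on `𝔽₃⟦X⟧`: `f(X)³ = f(X³)`. -/
lemma cube_eq_expand (f : (ZMod 3)⟦X⟧) : f ^ 3 = expand 3 (by norm_num) f := by
  ext n
  have h1 : coeff n (f ^ 3) = (((trunc (n + 1) f) ^ 3 : Polynomial (ZMod 3))).coeff n := by
    rw [← Polynomial.coeff_coe, Polynomial.coe_pow,
      ← coeff_coe_trunc_of_lt (f := f ^ 3) n.lt_succ_self,
      ← trunc_trunc_pow, coeff_coe_trunc_of_lt n.lt_succ_self]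
  have : Fact (Nat.Prime 3) := ⟨by norm_num⟩
  rw [h1, ← ZMod.expand_card, Polynomial.coeff_expand (by norm_num), coeff_expand]
  split_ifs with h
  · rw [coeff_trunc, if_pos (by omega)]
  · rfl

/-- The section operator extracting the coefficients at exponents `≡ r` mod `3`:
`∑ aₙ Xⁿ ↦ ∑ a₃ₙ₊ᵣ Xⁿ`. -/
noncomputable def sect (r : ℕ) (f : (ZMod 3)⟦X⟧) : (ZMod 3)⟦X⟧ :=
  PowerSeries.mk fun n => coeff (3 * n + r) f

lemma coeff_sect (r n : ℕ) (f : (ZMod 3)⟦X⟧) : coeff n (sect r f) = coeff (3 * n + r) f :=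
  coeff_mk _ _

lemma sect_add (r : ℕ) (f g : (ZMod 3)⟦X⟧) : sect r (f + g) = sect r f + sect r g := by
  ext n; simp [coeff_sect]

/-- As `g³ = g(X³)` mod `3`, a factor `g³` can be pulled out of a section as `g`. -/
lemma sect_mul_cube {r : ℕ} (hr : r < 3) (f g : (ZMod 3)⟦X⟧) :
    sect r (f * g ^ 3) = sect r f * g := by
  ext n
  rw [coeff_sect, cube_eq_expand, coeff_mul, coeff_mul]
  symm
  refine sum_of_injOn (fun p => (3 * p.1 + r, 3 * p.2)) ?_ ?_ ?_ ?_
  · intro p _ q _ h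
    simp only [Prod.mk.injEq] at h
    ext <;> omega
  · intro p hp
    simp only [mem_coe, HasAntidiagonal.mem_antidiagonal] at hp ⊢
    omega
  · intro p hp hp'
    rw [HasAntidiagonal.mem_antidiagonal] at hp
    rw [coeff_expand_of_not_dvd, mul_zero]
    rintro ⟨c, hc⟩
    refine hp' ⟨(n - c, c), ?_, ?_⟩
    · simp only [mem_coe, HasAntidiagonal.mem_antidiagonal]; omega
    · ext <;> simp <;> omega
  · intro p _
    rw [coeff_sect, coeff_expand_mul]

/-! ### The theta series mod 3 and its dissection -/

/-- `ψ(-X) = ∑ (-X) ^ (k(k+1)/2)` over `𝔽₃`, where `ψ` is the theta function of Ramanujan. The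
coefficient of `X ^ n` is `(-1) ^ n` if `n` is triangular, and `0` otherwise. -/
noncomputable def psi : (ZMod 3)⟦X⟧ :=
  open Classical in PowerSeries.mk fun n => if ∃ k, k * (k + 1) = 2 * n then (-1) ^ n else 0

/-- A number `3n + 1` is triangular iff `n = 3c` with `c` triangular, since
`T(3j+1) = 9 T(j) + 1` and `T(3j)`, `T(3j+2)` are divisible by `3`. -/
lemma sect_one_psi : sect 1 psi = -psi ^ 3 := by
  ext n
  rw [coeff_sect, map_neg, cube_eq_expand, coeff_expand]
  simp only [psi, coeff_mk]
  have key : (∃ k, k * (k + 1) = 2 * (3 * n + 1)) ↔ 3 ∣ n ∧ ∃ k, k * (k + 1) = 2 * (n / 3) := by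
    constructor
    · rintro ⟨k, hk⟩
      obtain ⟨j, rfl | rfl | rfl⟩ : ∃ j, k = 3 * j ∨ k = 3 * j + 1 ∨ k = 3 * j + 2 :=
        ⟨k / 3, by omega⟩
      · ring_nf at hk; omega
      · have : n = 3 * (j * (j + 1) / 2) := by
          obtain ⟨c, hc⟩ := (Nat.even_mul_succ_self j).two_dvd
          rw [hc]
          ring_nf at hk hc
          omega
        refine ⟨⟨_, this⟩, j, ?_⟩
        rw [this, Nat.mul_div_cancel_left _ (by norm_num),
          Nat.mul_div_cancel' (Nat.even_mul_succ_self j).two_dvd]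
      · ring_nf at hk; omega
    · rintro ⟨⟨c, rfl⟩, k, hk⟩
      rw [Nat.mul_div_cancel_left _ (by norm_num)] at hk
      exact ⟨3 * k + 1, by linear_combination 9 * hk⟩
  by_cases h3 : 3 ∣ n
  · obtain ⟨c, rfl⟩ := h3
    rw [if_pos (dvd_mul_right 3 c)]
    by_cases h : ∃ k, k * (k + 1) = 2 * (3 * c / 3)
    · rw [if_pos h, if_pos (key.2 ⟨dvd_mul_right 3 c, h⟩), Nat.mul_div_cancel_left _ (by norm_num),
        pow_succ, show 3 * (3 * c) = 9 * c by ring, pow_mul]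
      norm_num
    · rw [if_neg h, if_neg fun h' => h (key.1 h').2, neg_zero]
  · simp [key, h3]

lemma sect_two_psi : sect 2 psi = 0 := by
  ext n
  rw [coeff_sect, psi, coeff_mk, if_neg]
  · simp
  rintro ⟨k, hk⟩
  obtain ⟨j, rfl | rfl | rfl⟩ : ∃ j, k = 3 * j ∨ k = 3 * j + 1 ∨ k = 3 * j + 2 :=
    ⟨k / 3, by omega⟩ <;> ring_nf at hk <;> omega

lemma coeff_X_pow_mul_expand (g : (ZMod 3)⟦X⟧) (m : ℕ) {r t : ℕ} (hr : r < 3) (ht : t < 3) :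
    coeff (3 * m + t) (X ^ r * expand 3 (by norm_num) g) = if t = r then coeff m g else 0 := by
  rw [coeff_X_pow_mul', coeff_expand]
  by_cases h : t = r
  · subst h
    simp
  · rw [if_neg h]
    split_ifs
    · omega
    · rfl
    · rfl

/-- The 3-dissection of a power series over `𝔽₃`. -/
lemma sect_decomp (f : (ZMod 3)⟦X⟧) :
    f = X ^ 0 * sect 0 f ^ 3 + X ^ 1 * sect 1 f ^ 3 + X ^ 2 * sect 2 f ^ 3 := by
  simp only [cube_eq_expand]
  ext n
  obtain ⟨m, t, ht, rfl⟩ : ∃ m t, t < 3 ∧ n = 3 * m + t := ⟨n / 3, n % 3, by omega, by omega⟩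
  rw [map_add, map_add, coeff_X_pow_mul_expand _ _ (by norm_num) ht,
    coeff_X_pow_mul_expand _ _ (by norm_num) ht, coeff_X_pow_mul_expand _ _ (by norm_num) ht]
  interval_cases t <;> simp [coeff_sect]

lemma psi_dissection : psi = sect 0 psi ^ 3 - X * (psi ^ 3) ^ 3 := by
  conv_lhs => rw [sect_decomp psi, sect_one_psi, sect_two_psi]
  ring

lemma sect_two_psi_sq : sect 2 (psi ^ 2) = psi ^ 6 := by
  have h : psi ^ 2 = 1 * (sect 0 psi ^ 2) ^ 3 + X * (sect 0 psi * psi ^ 3) ^ 3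
      + X ^ 2 * (psi ^ 6) ^ 3 := by
    have h3 : (3 : (ZMod 3)⟦X⟧) = 0 := by
      have h := congrArg (C (R := ZMod 3)) (show (3 : ZMod 3) = 0 from rfl)
      rwa [map_ofNat, map_zero] at h
    conv_lhs => rw [psi_dissection]
    linear_combination (-X * (sect 0 psi * psi ^ 3) ^ 3) * h3
  have e0 : sect 2 1 = 0 := by ext n; simp [coeff_sect, coeff_one]
  have e1 : sect 2 X = 0 := by ext n; simp [coeff_sect, coeff_X]
  have e2 : sect 2 (X ^ 2) = 1 := by ext n; simp [coeff_sect, coeff_X_pow, coeff_one]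
  rw [h, sect_add, sect_add, sect_mul_cube (by norm_num), sect_mul_cube (by norm_num),
    sect_mul_cube (by norm_num), e0, e1, e2]
  ring

/-- If `G = 1 / ψ(-X)`, then `sect 2 G = ψ(-X)⁵`, and `sect 1 ∘ sect 2` negates `ψ(-X)⁵`. -/
lemma sect_formula (G : (ZMod 3)⟦X⟧) (hG : G * psi = 1) :
    sect 1 (sect 2 (sect 2 G)) = - sect 2 G := by
  have h1 : sect 2 G = psi ^ 5 := by
    have h : sect 2 (G * psi ^ 3) = sect 2 (psi ^ 2) := by
      congr 1; linear_combination psi ^ 2 * hG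
    rw [sect_mul_cube (by norm_num), sect_two_psi_sq] at h
    linear_combination G * h + (psi ^ 5 - sect 2 G) * hG
  have h2 : sect 2 (psi ^ 5) = psi * (psi ^ 2) ^ 3 := by
    rw [show psi ^ 5 = psi ^ 2 * psi ^ 3 by ring, sect_mul_cube (by norm_num), sect_two_psi_sq]
    ring
  rw [h1, h2, sect_mul_cube (by norm_num), sect_one_psi]
  ring

/-! ### The generating function of `pod` -/

/-- The first `n` terms of the theta series determine it mod `X ^ n`, as `s(s+1)/2 ≥ s`. -/
lemma X_pow_dvd_psi_sub (n : ℕ) :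
    (X : (ZMod 3)⟦X⟧) ^ n ∣ psi - ∑ s ∈ range n, (-X) ^ (s * (s + 1) / 2) := by
  rw [X_pow_dvd_iff]
  intro d hd
  rw [map_sub, map_sum, sub_eq_zero, psi, coeff_mk]
  have hc : ∀ s, coeff d ((-X : (ZMod 3)⟦X⟧) ^ (s * (s + 1) / 2))
      = if s * (s + 1) = 2 * d then (-1) ^ d else 0 := by
    intro s
    have h2 : 2 * (s * (s + 1) / 2) = s * (s + 1) :=
      Nat.mul_div_cancel' (Nat.even_mul_succ_self s).two_dvd
    rw [neg_pow, ← map_one C, ← map_neg, ← map_pow, coeff_C_mul, coeff_X_pow]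
    by_cases h : s * (s + 1) = 2 * d
    · rw [if_pos h, if_pos (by omega), mul_one, show s * (s + 1) / 2 = d by omega]
    · rw [if_neg h, if_neg (by omega), mul_zero]
  simp only [hc]
  split_ifs with h
  · obtain ⟨k, hk⟩ := h
    rw [sum_eq_single k, if_pos hk]
    · intro b _ hb
      rw [if_neg]
      intro hb'
      rcases lt_or_gt_of_ne hb with h | h <;> nlinarith
    · intro hk'
      rw [mem_range] at hk'
      exfalso
      rcases Nat.eq_zero_or_pos k with h | h <;> nlinarith
  · exact (sum_eq_zero fun s _ => if_neg fun hs => h ⟨s, hs⟩).symm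

/-- The generating function of `pod`, reduced mod `3`. -/
noncomputable def podSeries : (ZMod 3)⟦X⟧ := PowerSeries.mk fun n => (pod n : ZMod 3)

/-- The weight of a part `i` of multiplicity `c`: zero iff `i` is a repeated odd part. -/
def podChar (i c : ℕ) : ZMod 3 := if Odd i → c ≤ 1 then 1 else 0

lemma podSeries_eq_genFun : podSeries = Nat.Partition.genFun podChar := by
  classical
  ext n
  rw [podSeries, coeff_mk, Nat.Partition.coeff_genFun, pod, Nat.card_eq_fintype_card,
    Fintype.card_subtype, card_filter, Nat.cast_sum]
  refine sum_congr rfl fun p _ => ?_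
  simp_rw [Finsupp.prod, podChar, prod_boole]
  simp

open scoped PowerSeries.WithPiTopology

section
variable [TopologicalSpace (ZMod 3)]

/-- The factor of the product formula for `podSeries` contributed by the part `i + 1`. -/
noncomputable def podFactor (i : ℕ) : (ZMod 3)⟦X⟧ :=
  1 + ∑' j, podChar (i + 1) (j + 1) • (X : (ZMod 3)⟦X⟧) ^ ((i + 1) * (j + 1))

lemma podFactor_even (k : ℕ) : podFactor (2 * k) = 1 + X ^ (2 * k + 1) := by
  rw [podFactor, tsum_eq_single 0]
  · simp [podChar]
  · intro j hj
    have : podChar (2 * k + 1) (j + 1) = 0 := if_neg (by simp [hj])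
    rw [this, zero_smul]

variable [DiscreteTopology (ZMod 3)]

lemma podFactor_odd (k : ℕ) : podFactor (2 * k + 1) * (1 - X ^ (2 * (k + 1))) = 1 := by
  have h : ∀ j, podChar (2 * k + 1 + 1) (j + 1) = 1 := fun j =>
    if_pos fun h => absurd h (by simp [Nat.even_add_one])
  have hX : constantCoeff ((X : (ZMod 3)⟦X⟧) ^ (2 * (k + 1))) = 0 := by simp
  have hsum := PowerSeries.WithPiTopology.tsum_pow_mul_one_sub_of_constantCoeff_eq_zero hX
  rw [(PowerSeries.WithPiTopology.summable_pow_of_constantCoeff_eq_zero hX).tsum_eq_zero_add,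
    pow_zero] at hsum
  rw [podFactor]
  simp only [h, one_smul]
  simpa only [← pow_mul, show 2 * k + 1 + 1 = 2 * (k + 1) by ring] using hsum

lemma prod_podFactor (n : ℕ) :
    (∏ i ∈ range (2 * n), podFactor i) * evenProd (-X) n 0 = oddProd (-X) n := by
  induction n with
  | zero => simp [evenProd, oddProd]
  | succ n ih =>
    rw [show 2 * (n + 1) = 2 * n + 1 + 1 by ring, prod_range_succ, prod_range_succ,
      evenProd_succ_right _ n.zero_le, oddProd_succ, ← ih, podFactor_even,
      (even_two_mul (n + 1)).neg_pow, (odd_two_mul_add_one n).neg_pow]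
    linear_combination (∏ i ∈ range (2 * n), podFactor i) * evenProd (-X) n 0
      * (1 + X ^ (2 * n + 1)) * podFactor_odd n

lemma X_pow_dvd_prod_podFactor (n : ℕ) :
    X ^ (2 * n + 1) ∣ (∏ i ∈ range (2 * n), podFactor i) * psi - 1 := by
  set P := ∏ i ∈ range (2 * n), podFactor i
  set S : (ZMod 3)⟦X⟧ := ∑ s ∈ range (2 * n + 1), (-X) ^ (s * (s + 1) / 2) with hS
  have hunit : IsUnit (evenProd (-X : (ZMod 3)⟦X⟧) n 0) := by
    rw [isUnit_iff_constantCoeff, evenProd, map_prod]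
    simp
  have h1 : X ^ (2 * n + 1) ∣ evenProd (-X : (ZMod 3)⟦X⟧) n 0 * (P * S - 1) := by
    have h := shanks_identity (-X : (ZMod 3)⟦X⟧) n
    rw [sum_range_succ', ← hS, ← prod_podFactor n] at h
    have h' : evenProd (-X : (ZMod 3)⟦X⟧) n 0 * (P * S - 1) = ∑ s ∈ range n,
        evenProd (-X) n (s + 1) * oddProd (-X) (s + 1) * (-X) ^ ((s + 1) * (2 * n + 1)) := by
      have h0 : oddProd (-X : (ZMod 3)⟦X⟧) 0 = 1 := by simp [oddProd]
      rw [zero_mul, pow_zero, h0] at h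
      linear_combination -h
    rw [h']
    refine dvd_sum fun s _ => Dvd.dvd.mul_left ?_ _
    rw [neg_pow]
    exact Dvd.dvd.mul_left (pow_dvd_pow _ (by nlinarith)) _
  rw [hunit.dvd_mul_left] at h1
  have h2 := (X_pow_dvd_psi_sub (2 * n + 1)).mul_left P
  rw [show P * psi - 1 = P * (psi - S) + (P * S - 1) by ring]
  exact dvd_add h2 h1

lemma podSeries_mul_psi_aux : podSeries * psi = 1 := by
  have hlim : Filter.Tendsto (fun n => (∏ i ∈ range (2 * n), podFactor i) * psi) Filter.atTop
      (nhds (podSeries * psi)) := by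
    have h := (Nat.Partition.hasProd_genFun podChar).tendsto_prod_nat
    rw [← podSeries_eq_genFun] at h
    exact (h.comp (Filter.tendsto_id.const_mul_atTop' two_pos)).mul_const psi
  refine tendsto_nhds_unique hlim ?_
  rw [PowerSeries.WithPiTopology.tendsto_iff_coeff_tendsto]
  refine fun d => tendsto_atTop_of_eventually_const (i₀ := d) fun n hn => ?_
  rw [← sub_eq_zero, ← map_sub]
  exact X_pow_dvd_iff.1 (X_pow_dvd_prod_podFactor n) d (by omega)

end

/-- The identity of Gauss: the generating function of `pod` is `1 / ψ(-X)`. -/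
lemma podSeries_mul_psi : podSeries * psi = 1 := by
  let _ : TopologicalSpace (ZMod 3) := ⊥
  have _ : DiscreteTopology (ZMod 3) := ⟨rfl⟩
  exact podSeries_mul_psi_aux

theorem pod_internal_congruence (n : ℕ) :
    3 ∣ pod (3 * n + 2) + pod (27 * n + 17) := by
  have h := congrArg (coeff n) (sect_formula podSeries podSeries_mul_psi)
  simp only [coeff_sect, map_neg] at h
  rw [show 3 * (3 * (3 * n + 1) + 2) + 2 = 27 * n + 17 by ring] at h
  simp only [podSeries, coeff_mk] at h
  rw [← ZMod.natCast_eq_zero_iff, Nat.cast_add, h, add_neg_cancel]
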